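/- arXiv:2001.00314 — 2 statements merged into one kernel-verified Lean document; each statement's English description precedes it below -/
import Mathlib

section
/- Every 2-vector space has its composition given by the ⋄ formula. Precisely: let (C₀, C₁, s, t, i) be a reflexive graph internal to real vector spaces, let K = {(f, g) ∈ C₁ × C₁ : t(f) = s(g)} be the subspace of composable pairs, and let c : K → C₁ be a linear map satisfying the unit laws c(f, i(t(f))) = f and c(i(s(g)), g) = g for all f, g ∈ C₁. Then for every composable pair (f, g) ∈ K, c(f, g) = f + g − i(t(f)). -/
theorem map_mk_eq_sub_add_of_mem {A B H : Type*} [AddGroup A] [AddGroup B] [AddGroup H]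
    {K : AddSubgroup (A × B)} (c : K →+ H) {a a₀ : A} {b b₀ : B}
    (hab : (a, b) ∈ K) (ha₀ : (a, b₀) ∈ K) (h₀₀ : (a₀, b₀) ∈ K) (h₀b : (a₀, b) ∈ K) :
    c ⟨(a, b), hab⟩ = c ⟨(a, b₀), ha₀⟩ - c ⟨(a₀, b₀), h₀₀⟩ + c ⟨(a₀, b), h₀b⟩ := by
  have decomposition :
      (⟨(a, b), hab⟩ : K) = ⟨(a, b₀), ha₀⟩ - ⟨(a₀, b₀), h₀₀⟩ + ⟨(a₀, b), h₀b⟩ :=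
    Subtype.ext (by simp)
  rw [decomposition, map_add, map_sub]

theorem twoVectorSpace_comp_eq_diamond_general
    {C₀ C₁ : Type*} [AddGroup C₁] (s t : C₁ → C₀) (i : C₀ → C₁)
    (hsi : ∀ x : C₀, s (i x) = x) (hti : ∀ x : C₀, t (i x) = x)
    (K : AddSubgroup (C₁ × C₁)) (hK : ∀ p : C₁ × C₁, p ∈ K ↔ t p.1 = s p.2)
    (c : K →+ C₁)
    (unit_right : ∀ (f : C₁) (h : (f, i (t f)) ∈ K), c ⟨(f, i (t f)), h⟩ = f)
    (unit_left : ∀ (g : C₁) (h : (i (s g), g) ∈ K), c ⟨(i (s g), g), h⟩ = g) (p : K) :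
    c p = (p : C₁ × C₁).1 - i (t (p : C₁ × C₁).1) + (p : C₁ × C₁).2 := by
  obtain ⟨⟨f, g⟩, hfg⟩ := p
  have composable : t f = s g := (hK _).1 hfg
  have right_mem : (f, i (t f)) ∈ K := (hK _).2 (hsi _).symm
  have id_mem : (i (t f), i (t f)) ∈ K := (hK _).2 ((hti _).trans (hsi _).symm)
  have left_mem : (i (t f), g) ∈ K := (hK _).2 ((hti _).trans composable)
  have comp_id_id : c ⟨(i (t f), i (t f)), id_mem⟩ = i (t f) := by
    simpa only [hti] using unit_right (i (t f)) (by simpa only [hti] using id_mem)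
  have comp_id_left : c ⟨(i (t f), g), left_mem⟩ = g := by
    simpa only [composable] using unit_left g (composable ▸ left_mem)
  rw [map_mk_eq_sub_add_of_mem c hfg right_mem id_mem left_mem, unit_right, comp_id_id,
    comp_id_left]

/-- Every 2-vector space has composition given by the `⋄` formula: if `K` is the
subspace of composable pairs of a reflexive graph internal to real vector spaces and
`c : K →ₗ[ℝ] C₁` is a linear composition map satisfying the unit laws, then
`c (f, g) = f + g - i (t f)` for every composable pair `(f, g)`. -/
theorem twoVectorSpace_comp_eq_diamond
    {C₀ C₁ : Type*} [AddCommGroup C₀] [Module ℝ C₀] [AddCommGroup C₁] [Module ℝ C₁]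
    (s t : C₁ →ₗ[ℝ] C₀) (i : C₀ →ₗ[ℝ] C₁)
    (hsi : ∀ x : C₀, s (i x) = x) (hti : ∀ x : C₀, t (i x) = x)
    (K : Submodule ℝ (C₁ × C₁)) (hK : ∀ p : C₁ × C₁, p ∈ K ↔ t p.1 = s p.2)
    (c : K →ₗ[ℝ] C₁)
    (unit_right : ∀ (f : C₁) (h : ((f, i (t f)) : C₁ × C₁) ∈ K), c ⟨(f, i (t f)), h⟩ = f)
    (unit_left : ∀ (g : C₁) (h : ((i (s g), g) : C₁ × C₁) ∈ K), c ⟨(i (s g), g), h⟩ = g) :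
    ∀ p : K, c p = (p : C₁ × C₁).1 + (p : C₁ × C₁).2 - i (t (p : C₁ × C₁).1) := by
  intro p
  rw [← sub_add_eq_add_sub]
  exact twoVectorSpace_comp_eq_diamond_general s t i hsi hti K.toAddSubgroup hK
    c.toAddMonoidHom unit_right unit_left p
end

section
/- Let C and D be small categories, F, G : C → D functors, and α : F ⇒ G a natural transformation. Let Ch(F) and Ch(G) denote the chain maps obtained by applying to N(F) and N(G) the composite of the nerve functor, the levelwise free real vector space functor (turning simplicial sets into simplicial real vector spaces), and the alternating face map chain complex functor. Then there exists a chain homotopy from Ch(F) to Ch(G), i.e., a family of linear maps α_n : Ch(C)_n → Ch(D)_{n+1} with Ch(G)_n − Ch(F)_n = δ_{n+1} ∘ α_n + α_{n−1} ∘ δ_n for all n. -/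
open CategoryTheory AlgebraicTopology

/-- The composite 2-functor `Cat ⥤ Ch•(Vect)`: take the nerve, apply the free real
vector space functor levelwise, then take the alternating face map chain complex. -/
noncomputable def chainFunctor : Cat.{0, 0} ⥤ ChainComplex (ModuleCat.{0} ℝ) ℕ :=
  nerveFunctor ⋙
    (SimplicialObject.whiskering (Type 0) (ModuleCat.{0} ℝ)).obj (ModuleCat.free ℝ) ⋙
    alternatingFaceMapComplex (ModuleCat.{0} ℝ)

/-!
A natural transformation `α : F ⟶ G` is the same thing as a functor `C × [1] ⥤ D` restricting to
`F` and `G` at the two ends. On nerves it gives a map `N(C) × Δ[1] ⟶ N(C × [1]) ⟶ N(D)`, that is,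
a simplicial homotopy from `N(F)` to `N(G)`. Any functor applied levelwise preserves simplicial
homotopies, and in a preadditive category the alternating sum of the components of a simplicial
homotopy is a chain homotopy.
-/

universe w w' v v' u u'

section

open MonoidalCategory Simplicial

/-- The canonical comparison map `N(C) × Δ[n] ⟶ N(C × [n])`, pairing a chain in `C` with a
monotone map into `[n]`. The poset `[n]` is encoded as `Fin (n + 1)`. -/
def nerveTensorStdSimplex (C : Type u) [Category.{v} C] (n : ℕ) :
    nerve C ⊗ Δ[n] ⟶ nerve (C × Fin (n + 1)) where
  app _ := ↾fun x ↦
    Functor.prod' x.1 (SSet.stdSimplex.objEquiv x.2).toOrderHom.monotone.functor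

lemma ι₀_comp_nerveTensorStdSimplex (C : Type u) [Category.{v} C] :
    SSet.ι₀ ≫ nerveTensorStdSimplex C 1 = nerveMap (Prod.sectL C (0 : Fin 2)) :=
  rfl

lemma ι₁_comp_nerveTensorStdSimplex (C : Type u) [Category.{v} C] :
    SSet.ι₁ ≫ nerveTensorStdSimplex C 1 = nerveMap (Prod.sectL C (1 : Fin 2)) :=
  rfl

end

section

variable {C : Type u} {D : Type u'} [Category.{v} C] [Category.{v'} D] {F G : C ⥤ D}

lemma sectL_comp_uncurry {E : Type w} [Category.{w'} E] (K : C ⥤ E ⥤ D) (e : E) :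
    Prod.sectL C e ⋙ Functor.uncurry.obj K = K.flip.obj e :=
  Functor.hext (fun _ ↦ rfl) fun _ Y f ↦ heq_of_eq <|
    show (K.map f).app e ≫ (K.obj Y).map (𝟙 e) = (K.map f).app e by simp

/-- The functor `C × [1] ⥤ D` which corresponds to a natural transformation, with the poset `[1]`
encoded as `Fin 2`. Its nerve is the second half of the homotopy `nerveHomotopy`. -/
def natTransCylinder (α : F ⟶ G) : C × Fin 2 ⥤ D :=
  Functor.uncurry.obj (ComposableArrows.mk₁ α).flip

lemma sectL_zero_comp_natTransCylinder (α : F ⟶ G) :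
    Prod.sectL C 0 ⋙ natTransCylinder α = F :=
  sectL_comp_uncurry (ComposableArrows.mk₁ α).flip 0

lemma sectL_one_comp_natTransCylinder (α : F ⟶ G) :
    Prod.sectL C 1 ⋙ natTransCylinder α = G :=
  sectL_comp_uncurry (ComposableArrows.mk₁ α).flip 1

end

section

variable {C D : Type u} [Category.{v} C] [Category.{v} D] {F G : C ⥤ D}

/-- The simplicial homotopy between maps of nerves induced by a natural transformation, given as
the composite `N(C) × Δ[1] ⟶ N(C × [1]) ⟶ N(D)`. -/
def nerveHomotopy (α : F ⟶ G) : SSet.Homotopy (nerveMap F) (nerveMap G) where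
  h := nerveTensorStdSimplex C 1 ≫ nerveMap (natTransCylinder α)
  h₀ :=
    calc SSet.ι₀ ≫ nerveTensorStdSimplex C 1 ≫ nerveMap (natTransCylinder α)
      _ = nerveMap (Prod.sectL C 0) ≫ nerveMap (natTransCylinder α) := by
        rw [← Category.assoc, ι₀_comp_nerveTensorStdSimplex]
      _ = nerveMap (Prod.sectL C 0 ⋙ natTransCylinder α) := rfl
      _ = nerveMap F := by rw [sectL_zero_comp_natTransCylinder]
  h₁ :=
    calc SSet.ι₁ ≫ nerveTensorStdSimplex C 1 ≫ nerveMap (natTransCylinder α)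
      _ = nerveMap (Prod.sectL C 1) ≫ nerveMap (natTransCylinder α) := by
        rw [← Category.assoc, ι₁_comp_nerveTensorStdSimplex]
      _ = nerveMap (Prod.sectL C 1 ⋙ natTransCylinder α) := rfl
      _ = nerveMap G := by rw [sectL_one_comp_natTransCylinder]
  rel := by
    -- `SSet.Homotopy` is relative to the empty subcomplex, so `x.1` cannot exist.
    ext n x
    exact x.1.2.elim

theorem natTrans_induces_chain_homotopy_general {A : Type u'} [Category.{v'} A] [Preadditive A]
    (P : Type (max u v) ⥤ A) (α : F ⟶ G) :
    Nonempty
      (Homotopy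
        ((alternatingFaceMapComplex A).map
          (((SimplicialObject.whiskering _ A).obj P).map (nerveMap G)))
        ((alternatingFaceMapComplex A).map
          (((SimplicialObject.whiskering _ A).obj P).map (nerveMap F)))) :=
  ⟨((nerveHomotopy α).toSimplicialObjectHomotopy.whiskerRight P).toChainHomotopy.symm⟩

end

/-- A natural transformation `α : F ⇒ G` of functors between small categories induces
a chain homotopy between the chain maps `Ch(F)` and `Ch(G)` obtained from the nerve,
levelwise ℝ-linearization, and the alternating face map chain complex, i.e. a family
of maps `α_n` with `Ch(G)_n - Ch(F)_n = δ_{n+1} ∘ α_n + α_{n-1} ∘ δ_n`. -/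
theorem natTrans_induces_chain_homotopy {C D : Type} [SmallCategory C] [SmallCategory D]
    (F G : C ⥤ D) (α : F ⟶ G) :
    Nonempty
      (Homotopy (chainFunctor.map (X := Cat.of C) (Y := Cat.of D) G.toCatHom)
        (chainFunctor.map (X := Cat.of C) (Y := Cat.of D) F.toCatHom)) :=
  natTrans_induces_chain_homotopy_general (ModuleCat.free ℝ) α
end
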